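/- arXiv:2501.06599 — 2 statements merged into one kernel-verified Lean document; each statement's English description precedes it below -/
import Mathlib

section
/- Fix a nonzero k = (k1,k2) ∈ ℕ₀² and write k = ‖k‖·(cos κ, sin κ) with κ ∈ [0, π/2]. Let (l_m)_{m∈ℕ} be a sequence of nonzero elements of ℕ₀² with (l_m)₁ ≠ k1 and (l_m)₂ ≠ k2 for all m, such that ‖l_m‖ → ∞ and l_m/‖l_m‖ → (cos λ, sin λ) for some λ ∈ [0, π/2]. Then lim_{m→∞} C(k, l_m) = −(‖k‖²/(2·S_T))·( sin⁴(λ − κ) + sin⁴(λ + κ) ). -/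
/-- Area of the flat torus ℝ²/(2πℤ)². -/
noncomputable def STorus : ℝ := 4 * Real.pi ^ 2

/-- Cross product k×l = k1·l2 − k2·l1. -/
def cross (k l : ℤ × ℤ) : ℤ := k.1 * l.2 - k.2 * l.1

/-- Squared norm ‖k‖² = k1² + k2². -/
def nsq (k : ℤ × ℤ) : ℤ := k.1 ^ 2 + k.2 ^ 2

/-- Norm ‖k‖. -/
noncomputable def nrm (k : ℤ × ℤ) : ℝ := Real.sqrt ((k.1 : ℝ) ^ 2 + (k.2 : ℝ) ^ 2)

/-- Reflection l̄ = (l1, −l2). -/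
def conjPt (l : ℤ × ℤ) : ℤ × ℤ := (l.1, -l.2)

/-- Embedding of ℕ₀² into ℤ². -/
def emb (k : ℕ × ℕ) : ℤ × ℤ := ((k.1 : ℤ), (k.2 : ℤ))

/-- Sectional curvature C(k,l) of SDiff(𝕂) in the plane spanned by ξ_k, η_l. -/
noncomputable def Ccurv (k l : ℤ × ℤ) : ℝ :=
  -(1 / (4 * STorus * (nsq k : ℝ) * (nsq l : ℝ))) *
    ((cross k l : ℝ) ^ 4 / (nsq (k + l) : ℝ) +
     (cross k l : ℝ) ^ 4 / (nsq (k - l) : ℝ) +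
     (cross k (conjPt l) : ℝ) ^ 4 / (nsq (k + conjPt l) : ℝ) +
     (cross k (conjPt l) : ℝ) ^ 4 / (nsq (k - conjPt l) : ℝ))

/-!
Since `‖l‖ = ‖-l‖ = ‖l̄‖ = ‖-l̄‖`, the four summands of `C(k, l)` are the values of the single
expression `(k×l')⁴ / (‖l'‖² ‖k + l'‖²)` at `l' = l, -l, l̄, -l̄`. If `‖l‖ → ∞` and `l / ‖l‖ → u`,
then `‖k + l‖² / ‖l‖² → 1`, so this expression tends to `(k×u)⁴`, and for
`k = ‖k‖ (cos κ, sin κ)`, `u = (cos λ, sin λ)` the cross products `k×u` and `k×ū` are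
`‖k‖ sin (λ - κ)` and `-‖k‖ sin (λ + κ)`.
-/

section CurvatureLimit

open Filter Topology

variable {ι : Type*} {F : Filter ι} {L : ι → ℤ × ℤ} {u : ℝ × ℝ}

lemma nrm_sq (k : ℤ × ℤ) : nrm k ^ 2 = nsq k := by
  rw [nrm, Real.sq_sqrt (by positivity), nsq]
  push_cast
  rfl

lemma nrm_ne_zero {k : ℤ × ℤ} (hk : k ≠ 0) : nrm k ≠ 0 := by
  contrapose! hk
  rw [nrm, Real.sqrt_eq_zero (by positivity)] at hk
  have h₁ : (k.1 : ℝ) = 0 := by nlinarith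
  have h₂ : (k.2 : ℝ) = 0 := by nlinarith
  exact Prod.ext (by exact_mod_cast h₁) (by exact_mod_cast h₂)

lemma nrm_neg (k : ℤ × ℤ) : nrm (-k) = nrm k := by simp [nrm]

lemma nrm_conjPt (k : ℤ × ℤ) : nrm (conjPt k) = nrm k := by simp [nrm, conjPt]

lemma nsq_neg (k : ℤ × ℤ) : nsq (-k) = nsq k := by simp [nsq]

lemma nsq_conjPt (k : ℤ × ℤ) : nsq (conjPt k) = nsq k := by simp [nsq, conjPt]

lemma nsq_add (k l : ℤ × ℤ) :
    nsq (k + l) = nsq k + 2 * (k.1 * l.1 + k.2 * l.2) + nsq l := by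
  simp only [nsq, Prod.fst_add, Prod.snd_add]
  ring

lemma cross_neg_right (k l : ℤ × ℤ) : cross k (-l) = -cross k l := by
  simp only [cross, Prod.fst_neg, Prod.snd_neg]
  ring

/-- The normalized summand `(k×l)⁴ / (‖l‖² ‖k + l‖²)` of the curvature `C(k, l)`. The other three
summands are its values at `-l`, `l̄` and `-l̄`. -/
noncomputable def curvatureTerm (k l : ℤ × ℤ) : ℝ :=
  (cross k l : ℝ) ^ 4 / (nsq l * nsq (k + l))

lemma Ccurv_eq_sum_curvatureTerm (k l : ℤ × ℤ) :
    Ccurv k l = -(1 / (4 * STorus * nsq k)) *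
      (curvatureTerm k l + curvatureTerm k (-l) +
        curvatureTerm k (conjPt l) + curvatureTerm k (-conjPt l)) := by
  simp only [Ccurv, curvatureTerm, cross_neg_right, nsq_neg, nsq_conjPt, ← sub_eq_add_neg,
    Int.cast_neg]
  ring

/-- The points `L i` escape to infinity along `F` with limiting direction `u`, that is, `‖L i‖ → ∞`
and `L i / ‖L i‖ → u`. -/
structure TendstoInftyInDirection (L : ι → ℤ × ℤ) (F : Filter ι) (u : ℝ × ℝ) : Prop where
  nrm_tendsto : Tendsto (fun i => nrm (L i)) F atTop
  direction_tendsto :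
    Tendsto (fun i => ((L i).1 / nrm (L i), (L i).2 / nrm (L i))) F (𝓝 u)

namespace TendstoInftyInDirection

lemma tendsto_fst_div_nrm (h : TendstoInftyInDirection L F u) :
    Tendsto (fun i => (L i).1 / nrm (L i)) F (𝓝 u.1) :=
  h.direction_tendsto.fst_nhds

lemma tendsto_snd_div_nrm (h : TendstoInftyInDirection L F u) :
    Tendsto (fun i => (L i).2 / nrm (L i)) F (𝓝 u.2) :=
  h.direction_tendsto.snd_nhds

protected lemma neg (h : TendstoInftyInDirection L F u) :
    TendstoInftyInDirection (fun i => -L i) F (-u) where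
  nrm_tendsto := by simpa only [nrm_neg] using h.nrm_tendsto
  direction_tendsto := by
    simpa only [nrm_neg, Prod.fst_neg, Prod.snd_neg, Int.cast_neg, neg_div, Prod.neg_mk]
      using h.direction_tendsto.neg

protected lemma conjPt (h : TendstoInftyInDirection L F u) :
    TendstoInftyInDirection (fun i => conjPt (L i)) F (u.1, -u.2) where
  nrm_tendsto := by simpa only [nrm_conjPt] using h.nrm_tendsto
  direction_tendsto := by
    simp only [nrm_conjPt]
    simpa only [conjPt, Int.cast_neg, neg_div]
      using h.tendsto_fst_div_nrm.prodMk_nhds h.tendsto_snd_div_nrm.neg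

lemma tendsto_cross_div_nrm (h : TendstoInftyInDirection L F u) (k : ℤ × ℤ) :
    Tendsto (fun i => cross k (L i) / nrm (L i)) F (𝓝 (k.1 * u.2 - k.2 * u.1)) := by
  refine ((h.tendsto_snd_div_nrm.const_mul (k.1 : ℝ)).sub
    (h.tendsto_fst_div_nrm.const_mul (k.2 : ℝ))).congr fun i => ?_
  rw [cross]
  push_cast
  ring

lemma tendsto_nsq_add_div_nsq (h : TendstoInftyInDirection L F u) (k : ℤ × ℤ) :
    Tendsto (fun i => (nsq (k + L i) : ℝ) / nsq (L i)) F (𝓝 1) := by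
  have const_div_tendsto (a : ℝ) : Tendsto (fun i => a / nrm (L i)) F (𝓝 0) :=
    h.nrm_tendsto.const_div_atTop a
  have nsq_part : Tendsto (fun i => (nsq k : ℝ) / nsq (L i)) F (𝓝 0) := by
    simp_rw [← nrm_sq (L _)]
    exact ((tendsto_pow_atTop two_ne_zero).comp h.nrm_tendsto).const_div_atTop _
  have inner_part :
      Tendsto (fun i => (2 * (k.1 * (L i).1 + k.2 * (L i).2) : ℝ) / nsq (L i)) F (𝓝 0) := by
    have dot_tendsto := ((const_div_tendsto (2 * k.1)).mul h.tendsto_fst_div_nrm).add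
      ((const_div_tendsto (2 * k.2)).mul h.tendsto_snd_div_nrm)
    rw [zero_mul, zero_mul, add_zero] at dot_tendsto
    refine dot_tendsto.congr fun i => ?_
    rw [← nrm_sq]
    ring
  have sum_tendsto := (nsq_part.add inner_part).add_const 1
  rw [add_zero, zero_add] at sum_tendsto
  refine sum_tendsto.congr' ?_
  filter_upwards [h.nrm_tendsto.eventually_ne_atTop 0] with i hi
  have nsq_ne : (nsq (L i) : ℝ) ≠ 0 := by
    rw [← nrm_sq]
    exact pow_ne_zero 2 hi
  rw [nsq_add]
  push_cast
  rw [add_div, add_div, div_self nsq_ne]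

lemma tendsto_curvatureTerm (h : TendstoInftyInDirection L F u) (k : ℤ × ℤ) :
    Tendsto (fun i => curvatureTerm k (L i)) F (𝓝 ((k.1 * u.2 - k.2 * u.1) ^ 4)) := by
  have quotient_tendsto := ((h.tendsto_cross_div_nrm k).pow 4).div
    (h.tendsto_nsq_add_div_nsq k) one_ne_zero
  rw [div_one] at quotient_tendsto
  refine quotient_tendsto.congr fun i => ?_
  rw [Pi.div_apply, curvatureTerm, ← nrm_sq (L i)]
  field_simp

lemma tendsto_Ccurv (h : TendstoInftyInDirection L F u) (k : ℤ × ℤ) :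
    Tendsto (fun i => Ccurv k (L i)) F
      (𝓝 (-(1 / (2 * STorus * nsq k)) *
        ((k.1 * u.2 - k.2 * u.1) ^ 4 + (k.1 * u.2 + k.2 * u.1) ^ 4))) := by
  have sum_tendsto := (((h.tendsto_curvatureTerm k).add (h.neg.tendsto_curvatureTerm k)).add
    (h.conjPt.tendsto_curvatureTerm k)).add (h.conjPt.neg.tendsto_curvatureTerm k)
  simp_rw [Ccurv_eq_sum_curvatureTerm]
  convert sum_tendsto.const_mul (-(1 / (4 * STorus * nsq k))) using 2
  simp only [Prod.fst_neg, Prod.snd_neg]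
  ring

end TendstoInftyInDirection

theorem asymptotic_sectional_curvature_klein_general {k : ℤ × ℤ} (hk : k ≠ 0) {κ lam : ℝ}
    (hkdir : ((k.1 : ℝ), (k.2 : ℝ)) = (nrm k * Real.cos κ, nrm k * Real.sin κ))
    (hL : TendstoInftyInDirection L F (Real.cos lam, Real.sin lam)) :
    Tendsto (fun i => Ccurv k (L i)) F
      (𝓝 (-(nsq k / (2 * STorus)) * (Real.sin (lam - κ) ^ 4 + Real.sin (lam + κ) ^ 4))) := by
  obtain ⟨hk₁, hk₂⟩ := Prod.mk.inj hkdir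
  have hcross : k.1 * Real.sin lam - k.2 * Real.cos lam = nrm k * Real.sin (lam - κ) := by
    rw [hk₁, hk₂, Real.sin_sub]
    ring
  have hcross_conj : k.1 * Real.sin lam + k.2 * Real.cos lam = nrm k * Real.sin (lam + κ) := by
    rw [hk₁, hk₂, Real.sin_add]
    ring
  have hpow : nrm k ^ 4 / nrm k ^ 2 = nrm k ^ 2 := by
    rw [div_eq_iff (pow_ne_zero 2 (nrm_ne_zero hk)), ← pow_add]
  convert hL.tendsto_Ccurv k using 2
  calc -(nsq k / (2 * STorus)) * (Real.sin (lam - κ) ^ 4 + Real.sin (lam + κ) ^ 4)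
      = -(nrm k ^ 4 / nrm k ^ 2 / (2 * STorus)) *
          (Real.sin (lam - κ) ^ 4 + Real.sin (lam + κ) ^ 4) := by
        rw [hpow, nrm_sq]
    _ = -(1 / (2 * STorus * nsq k)) *
          ((k.1 * Real.sin lam - k.2 * Real.cos lam) ^ 4 +
            (k.1 * Real.sin lam + k.2 * Real.cos lam) ^ 4) := by
        rw [hcross, hcross_conj, nrm_sq]
        ring

end CurvatureLimit

theorem asymptotic_sectional_curvature_klein
    (k : ℕ × ℕ) (hk : k ≠ (0, 0)) (κ : ℝ) (hκ : κ ∈ Set.Icc 0 (Real.pi / 2))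
    (hkdir : ((k.1 : ℝ), (k.2 : ℝ)) = (nrm (emb k) * Real.cos κ, nrm (emb k) * Real.sin κ))
    (L : ℕ → ℕ × ℕ) (hL0 : ∀ m, L m ≠ (0, 0))
    (h1 : ∀ m, (L m).1 ≠ k.1) (h2 : ∀ m, (L m).2 ≠ k.2)
    (lam : ℝ) (hlam : lam ∈ Set.Icc 0 (Real.pi / 2))
    (hnorm : Filter.Tendsto (fun m => nrm (emb (L m))) Filter.atTop Filter.atTop)
    (hdir : Filter.Tendsto
      (fun m => (((L m).1 : ℝ) / nrm (emb (L m)), ((L m).2 : ℝ) / nrm (emb (L m))))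
      Filter.atTop (nhds (Real.cos lam, Real.sin lam))) :
    Filter.Tendsto (fun m => Ccurv (emb k) (emb (L m))) Filter.atTop
      (nhds (-((nsq (emb k) : ℝ) / (2 * STorus)) *
        (Real.sin (lam - κ) ^ 4 + Real.sin (lam + κ) ^ 4))) :=
  asymptotic_sectional_curvature_klein_general (by simpa [emb, Prod.ext_iff] using hk)
    (by simpa only [emb, Int.cast_natCast] using hkdir)
    ⟨hnorm, by simpa only [emb, Int.cast_natCast] using hdir⟩
end

section
/- For all integers l ≥ 3 and m with |m| ≤ l and |m| ≠ 1, one has Cpe(l,m) ≤ 0; moreover lim_{l→∞} Cpe(l, 1) = 0 and lim_{l→∞} Cpe(l, −1) = 0. In other words, the sectional curvature Cpe(l,m) can be positive only for m = ±1, and along m = ±1 it tends to zero as l → ∞. -/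
/-- The common square term Q(l,m). -/
noncomputable def Qf (l : ℕ) (m : ℤ) : ℝ :=
  (1 / 8) * (((l : ℝ) ^ 2 - (m : ℝ) ^ 2) / ((2 * (l : ℝ) + 1) * (2 * (l : ℝ) - 1)) +
    (((l : ℝ) + 1) ^ 2 - (m : ℝ) ^ 2) / ((2 * (l : ℝ) + 3) * (2 * (l : ℝ) + 1)) - 1 / 5) ^ 2

/-- The coefficient ϑ(l,m). -/
noncomputable def thf (l : ℕ) (m : ℤ) : ℝ :=
  (1 / 8) * ((((l : ℝ) + 2) ^ 2 - (m : ℝ) ^ 2) * (((l : ℝ) + 1) ^ 2 - (m : ℝ) ^ 2) *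
      ((l : ℝ) + 1) * (l : ℝ)) /
    ((2 * (l : ℝ) + 3) ^ 2 * (2 * (l : ℝ) + 5) * (2 * (l : ℝ) + 1) * ((l : ℝ) + 2) * ((l : ℝ) + 3)) +
  (1 / 8) * ((((l : ℝ) - 1) ^ 2 - (m : ℝ) ^ 2) * ((l : ℝ) ^ 2 - (m : ℝ) ^ 2) *
      ((l : ℝ) + 1) * (l : ℝ)) /
    ((2 * (l : ℝ) - 3) * (2 * (l : ℝ) - 1) ^ 2 * (2 * (l : ℝ) + 1) * ((l : ℝ) - 2) * ((l : ℝ) - 1)) +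
  Qf l m

/-- The coefficient ϱ(l,m). -/
noncomputable def rhf (l : ℕ) (m : ℤ) : ℝ :=
  (1 / 8) * ((((l : ℝ) + 2) ^ 2 - (m : ℝ) ^ 2) * (((l : ℝ) + 1) ^ 2 - (m : ℝ) ^ 2)) /
    ((2 * (l : ℝ) + 1) * (2 * (l : ℝ) + 3) ^ 2 * (2 * (l : ℝ) + 5)) +
  (1 / 8) * ((((l : ℝ) - 1) ^ 2 - (m : ℝ) ^ 2) * ((l : ℝ) ^ 2 - (m : ℝ) ^ 2)) /
    ((2 * (l : ℝ) - 3) * (2 * (l : ℝ) - 1) ^ 2 * (2 * (l : ℝ) + 1)) +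
  Qf l m

/-- The coefficient γ(l,m). -/
noncomputable def gaf (l : ℕ) (m : ℤ) : ℝ :=
  (1 / 8) * ((((l : ℝ) + 2) ^ 2 - (m : ℝ) ^ 2) * (((l : ℝ) + 1) ^ 2 - (m : ℝ) ^ 2) *
      ((l : ℝ) + 2) * ((l : ℝ) + 3)) /
    ((2 * (l : ℝ) + 1) * (2 * (l : ℝ) + 3) ^ 2 * (2 * (l : ℝ) + 5) * ((l : ℝ) + 1) * (l : ℝ)) +
  (1 / 8) * ((((l : ℝ) - 1) ^ 2 - (m : ℝ) ^ 2) * ((l : ℝ) ^ 2 - (m : ℝ) ^ 2) *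
      ((l : ℝ) - 2) * ((l : ℝ) - 1)) /
    ((2 * (l : ℝ) - 3) * (2 * (l : ℝ) - 1) ^ 2 * (2 * (l : ℝ) + 1) * ((l : ℝ) + 1) * (l : ℝ)) +
  Qf l m

/-- The sectional curvature C(e⁰₃, e^m_l) of SDiff(𝕊²) (Theorem 5.3 of the paper). -/
noncomputable def Cpe (l : ℕ) (m : ℤ) : ℝ :=
  -(525 * (m : ℝ) ^ 2 / (32 * Real.pi)) *
    (3 * gaf l m - 2 * (12 / ((l : ℝ) * ((l : ℝ) + 1)) + 1) * rhf l m -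
      (12 / ((l : ℝ) * ((l : ℝ) + 1)) - 1) ^ 2 * thf l m)

/-!
Multiplication by `cos² θ - 1/5` couples the spherical harmonic of degree `l` and order `m` only to
those of degrees `l + 2`, `l` and `l - 2`, and `γ`, `ϱ`, `ϑ` sum the same squared matrix elements,
weighted by the ratio of the two Laplace eigenvalues to the powers `1`, `0`, `-1`. Collecting terms
by target degree, the curvature is a negative multiple of a sum of three squared matrix elements,
each multiplied by a value of one kernel. As a function of `M = m²` this sum is a concave quadratic:
the diagonal kernel is negative, and the coupling down to `l - 2`, whose kernel is negative,
outweighs the coupling up to `l + 2`. Hence it is nonnegative on `[4, l²]` once it is so at both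
endpoints. For the limit, the squared matrix elements are bounded while the kernels are `O(1 / l)`.
-/

section Concave

variable {𝕜 : Type*} [Field 𝕜] [LinearOrder 𝕜] [IsStrictOrderedRing 𝕜]

theorem concaveOn_quadratic {a : 𝕜} (ha : a ≤ 0) (b c : 𝕜) :
    ConcaveOn 𝕜 Set.univ fun x : 𝕜 => a * x ^ 2 + b * x + c := by
  have hsq : ConcaveOn 𝕜 Set.univ fun x : 𝕜 => a * x ^ 2 := by
    rw [← neg_convexOn_iff]
    simpa [Pi.neg_def] using (even_two.convexOn_pow (𝕜 := 𝕜)).smul (neg_nonneg.mpr ha)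
  have hlin : ConcaveOn 𝕜 Set.univ fun x : 𝕜 => b * x :=
    (LinearMap.mulLeft 𝕜 b).concaveOn convex_univ
  exact (hsq.add hlin).add_const c

theorem concaveOn_mul_sub_mul_sub_add {p q : 𝕜} (hpq : p + q ≤ 0) (a b c d : 𝕜) :
    ConcaveOn 𝕜 Set.univ fun x : 𝕜 => p * ((a - x) * (b - x)) + q * ((c - x) * (d - x)) := by
  convert concaveOn_quadratic hpq (-(p * (a + b) + q * (c + d))) (p * (a * b) + q * (c * d))
    using 2
  ring

end Concave

/-- The eigenvalue `l(l + 1)` of the Laplacian on `𝕊²` in degree `l`, for real `l`. -/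
def sphereEigenvalue (l : ℝ) : ℝ := l * (l + 1)

/-- One eighth of the squared matrix element of multiplication by `cos² θ` between the normalized
spherical harmonics of degrees `l` and `l + 2` and order `m`, where `M = m²`. -/
noncomputable def couplingWeight (l M : ℝ) : ℝ :=
  ((l + 2) ^ 2 - M) * ((l + 1) ^ 2 - M) / (8 * ((2 * l + 1) * (2 * l + 3) ^ 2 * (2 * l + 5)))

/-- One eighth of the squared diagonal matrix element of multiplication by `cos² θ - 1/5` in degree
`l` and order `m`, where `M = m²`; this is the term `Q` with all fractions put together. -/
noncomputable def diagonalWeight (l M : ℝ) : ℝ :=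
  (3 * sphereEigenvalue l - 1 - 5 * M) ^ 2 / (50 * ((2 * l - 1) * (2 * l + 3)) ^ 2)

/-- The factor with which a squared matrix element from Laplace eigenvalue `lam` to Laplace
eigenvalue `mu` enters the curvature; `12` is the eigenvalue of the trade-wind field. -/
noncomputable def curvatureKernel (lam mu : ℝ) : ℝ :=
  3 * (mu / lam) - 2 * (12 / lam + 1) - (12 / lam - 1) ^ 2 * (lam / mu)

/-- The expression `3γ - 2(12/(l(l+1)) + 1)ϱ - (12/(l(l+1)) - 1)²ϑ`, grouped by the degrees `l + 2`,
`l - 2` and `l` coupled to `l`, for real `l` and with `M` in place of `m²`. -/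
noncomputable def curvatureBracket (l M : ℝ) : ℝ :=
  couplingWeight l M * curvatureKernel (sphereEigenvalue l) (sphereEigenvalue (l + 2)) +
    couplingWeight (l - 2) M * curvatureKernel (sphereEigenvalue l) (sphereEigenvalue (l - 2)) +
    diagonalWeight l M * curvatureKernel (sphereEigenvalue l) (sphereEigenvalue l)

theorem sphereEigenvalue_add_two (l : ℝ) : sphereEigenvalue (l + 2) = (l + 2) * (l + 3) := by
  unfold sphereEigenvalue; ring

theorem sphereEigenvalue_sub_two (l : ℝ) : sphereEigenvalue (l - 2) = (l - 2) * (l - 1) := by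
  unfold sphereEigenvalue; ring

theorem sphereEigenvalue_pos {l : ℝ} (hl : 0 < l) : 0 < sphereEigenvalue l := by
  unfold sphereEigenvalue; positivity

theorem twelve_le_sphereEigenvalue {l : ℝ} (hl : 3 ≤ l) : 12 ≤ sphereEigenvalue l := by
  unfold sphereEigenvalue; nlinarith

-- `field_simp` normalizes `2 * l` to `l * 2`, hence the shape of the first two conjuncts.
theorem denominators_ne_zero {l : ℝ} (hl : 2 < l) :
    l * 2 - 1 ≠ 0 ∧ l * 2 - 3 ≠ 0 ∧ l - 1 ≠ 0 ∧ l - 2 ≠ 0 := by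
  refine ⟨?_, ?_, ?_, ?_⟩ <;> linarith

theorem couplingWeight_sub_two (l M : ℝ) :
    couplingWeight (l - 2) M = (l ^ 2 - M) * ((l - 1) ^ 2 - M) /
      (8 * ((2 * l - 3) * (2 * l - 1) ^ 2 * (2 * l + 1))) := by
  unfold couplingWeight; congr 1 <;> ring

theorem curvatureKernel_eq {lam mu : ℝ} (hlam : lam ≠ 0) (hmu : mu ≠ 0) :
    curvatureKernel lam mu =
      (4 * (lam - 6) * (mu - lam) + 3 * (mu - lam) ^ 2 - 144) / (lam * mu) := by
  unfold curvatureKernel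
  field_simp
  ring

theorem curvatureKernel_self {lam : ℝ} (hlam : lam ≠ 0) :
    curvatureKernel lam lam = -144 / lam ^ 2 := by
  rw [curvatureKernel_eq hlam hlam]; ring

theorem curvatureKernel_add_two {l : ℝ} (hl : 0 < l) :
    curvatureKernel (sphereEigenvalue l) (sphereEigenvalue (l + 2)) =
      4 * (4 * l ^ 3 + 22 * l ^ 2 + 18 * l - 45) /
        (l * (l + 1) * ((l + 2) * (l + 3))) := by
  rw [curvatureKernel_eq (sphereEigenvalue_pos hl).ne' (sphereEigenvalue_pos (by linarith)).ne',
    sphereEigenvalue_add_two, sphereEigenvalue]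
  ring

theorem curvatureKernel_sub_two {l : ℝ} (hl : 2 < l) :
    curvatureKernel (sphereEigenvalue l) (sphereEigenvalue (l - 2)) =
      -(4 * (4 * l ^ 3 - 10 * l ^ 2 - 14 * l + 45)) /
        (l * (l + 1) * ((l - 2) * (l - 1))) := by
  rw [curvatureKernel_eq (sphereEigenvalue_pos (by linarith)).ne'
    (sphereEigenvalue_pos (by linarith)).ne', sphereEigenvalue_sub_two, sphereEigenvalue]
  ring

section Nonneg

variable {l M : ℝ}

theorem curvatureBracket_leadingCoeff_nonpos (hl : 2 < l) :
    curvatureKernel (sphereEigenvalue l) (sphereEigenvalue (l + 2)) /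
        (8 * ((2 * l + 1) * (2 * l + 3) ^ 2 * (2 * l + 5))) +
      curvatureKernel (sphereEigenvalue l) (sphereEigenvalue (l - 2)) /
        (8 * ((2 * l - 3) * (2 * l - 1) ^ 2 * (2 * l + 1))) ≤ 0 := by
  set x := sphereEigenvalue l with hx
  have hnum : 0 ≤ 256 * x ^ 4 - 3056 * x ^ 3 + 10056 * x ^ 2 + 26469 * x + 5940 := by
    have hx_pos : 0 < x := sphereEigenvalue_pos (by linarith)
    -- `256 x² - 3056 x + 10056` has negative discriminant
    have hquad : 0 ≤ 256 * x ^ 2 - 3056 * x + 10056 := by nlinarith [sq_nonneg (16 * x - 95.5)]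
    nlinarith [mul_nonneg (sq_nonneg x) hquad]
  have hden : 0 ≤ l * (l + 1) * ((l + 2) * (l - 1)) * ((l + 3) * (l - 2)) *
      ((2 * l - 3) * (2 * l + 5)) * ((2 * l - 1) * (2 * l + 3)) ^ 2 * (2 * l + 1) ^ 2 := by
    have h₁ : 0 < l - 1 := by linarith
    have h₃ : 0 < 2 * l - 3 := by linarith
    positivity
  calc
    _ = -(256 * x ^ 4 - 3056 * x ^ 3 + 10056 * x ^ 2 + 26469 * x + 5940) /
        (l * (l + 1) * ((l + 2) * (l - 1)) * ((l + 3) * (l - 2)) *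
          ((2 * l - 3) * (2 * l + 5)) * ((2 * l - 1) * (2 * l + 3)) ^ 2 * (2 * l + 1) ^ 2) := by
      obtain ⟨h₁, h₃, h₁', h₂'⟩ := denominators_ne_zero hl
      rw [hx, curvatureKernel_add_two (by linarith), curvatureKernel_sub_two (by linarith),
        sphereEigenvalue]
      field_simp
      ring
    _ ≤ 0 := div_nonpos_of_nonpos_of_nonneg (neg_nonpos.mpr hnum) hden

theorem concaveOn_curvatureBracket (hl : 2 < l) :
    ConcaveOn ℝ Set.univ (curvatureBracket l) := by
  have hcoupling := concaveOn_mul_sub_mul_sub_add (curvatureBracket_leadingCoeff_nonpos hl)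
    ((l + 2) ^ 2) ((l + 1) ^ 2) (l ^ 2) ((l - 1) ^ 2)
  have hself : 25 * (curvatureKernel (sphereEigenvalue l) (sphereEigenvalue l) /
      (50 * ((2 * l - 1) * (2 * l + 3)) ^ 2)) + 0 ≤ 0 := by
    rw [curvatureKernel_self (sphereEigenvalue_pos (by linarith)).ne', add_zero]
    refine mul_nonpos_of_nonneg_of_nonpos (by norm_num)
      (div_nonpos_of_nonpos_of_nonneg ?_ (by positivity))
    exact div_nonpos_of_nonpos_of_nonneg (by norm_num) (by positivity)
  have hdiagonal := concaveOn_mul_sub_mul_sub_add hself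
    ((3 * sphereEigenvalue l - 1) / 5) ((3 * sphereEigenvalue l - 1) / 5) 0 0
  refine (hcoupling.add hdiagonal).congr fun M _ => ?_
  simp only [curvatureBracket, couplingWeight, diagonalWeight, Pi.add_apply]
  ring

theorem curvatureBracket_four (hl : 2 < l) :
    curvatureBracket l 4 =
      3 * (6544 * sphereEigenvalue l ^ 5 - 57608 * sphereEigenvalue l ^ 4
        - 38283 * sphereEigenvalue l ^ 3 + 1735740 * sphereEigenvalue l ^ 2
        - 834678 * sphereEigenvalue l - 317520) /
      (25 * ((l * (l + 1)) ^ 2 * ((l + 2) * (l - 1)) * ((2 * l - 3) * (2 * l + 5)) *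
        ((2 * l - 1) * (2 * l + 3)) ^ 2 * (2 * l + 1) ^ 2)) := by
  obtain ⟨h₁, h₃, h₁', h₂'⟩ := denominators_ne_zero hl
  rw [curvatureBracket, curvatureKernel_add_two (by linarith),
    curvatureKernel_sub_two (by linarith),
    curvatureKernel_self (sphereEigenvalue_pos (by linarith)).ne',
    couplingWeight_sub_two, couplingWeight, diagonalWeight, sphereEigenvalue]
  field_simp
  ring

theorem curvatureBracket_four_nonneg (hl : 3 ≤ l) : 0 ≤ curvatureBracket l 4 := by
  rw [curvatureBracket_four (by linarith)]
  have h₁ : 0 < l - 1 := by linarith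
  have h₃ : 0 < 2 * l - 3 := by linarith
  refine div_nonneg (mul_nonneg (by norm_num) ?_) (by positivity)
  -- in powers of `t = l (l + 1) - 12` the numerator has nonnegative coefficients
  obtain ⟨t, ht, hx⟩ := exists_nonneg_add_of_le (twelve_le_sphereEigenvalue hl)
  rw [← hx]
  ring_nf
  positivity

theorem curvatureBracket_sq (hl : 2 < l) :
    curvatureBracket l (l ^ 2) =
      2 * (25 * (l * (l + 1) ^ 2) * (4 * l ^ 3 + 22 * l ^ 2 + 18 * l - 45)
        - 36 * ((l - 1) ^ 2 * (l + 2) * (l + 3) * (2 * l + 5))) /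
      (25 * ((2 * l + 3) ^ 2 * (l * (l + 1)) ^ 2 * (l + 2) * (l + 3) * (2 * l + 5))) := by
  obtain ⟨h₁, h₃, h₁', h₂'⟩ := denominators_ne_zero hl
  rw [curvatureBracket, curvatureKernel_add_two (by linarith),
    curvatureKernel_sub_two (by linarith),
    curvatureKernel_self (sphereEigenvalue_pos (by linarith)).ne',
    couplingWeight_sub_two, couplingWeight, diagonalWeight, sphereEigenvalue]
  field_simp
  ring

theorem curvatureBracket_sq_nonneg (hl : 3 ≤ l) : 0 ≤ curvatureBracket l (l ^ 2) := by
  rw [curvatureBracket_sq (by linarith)]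
  refine div_nonneg (mul_nonneg (by norm_num) ?_) (by positivity)
  -- in powers of `t = l - 3` the numerator has nonnegative coefficients
  obtain ⟨t, ht, rfl⟩ := exists_nonneg_add_of_le hl
  ring_nf
  positivity

theorem curvatureBracket_nonneg (hl : 3 ≤ l) (hM : M ∈ Set.Icc 4 (l ^ 2)) :
    0 ≤ curvatureBracket l M :=
  (le_min (curvatureBracket_four_nonneg hl) (curvatureBracket_sq_nonneg hl)).trans
    ((concaveOn_curvatureBracket (by linarith)).min_le_of_mem_Icc (Set.mem_univ _)
      (Set.mem_univ _) hM)

end Nonneg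

section Decay

variable {l M : ℝ}

theorem abs_couplingWeight_le (hl : 0 ≤ l) (hM₀ : 0 ≤ M) (hM : M ≤ (l + 2) ^ 2) :
    |couplingWeight l M| ≤ 1 / 8 := by
  have hfst : |(l + 2) ^ 2 - M| ≤ (l + 2) ^ 2 := abs_le.mpr ⟨by linarith, by linarith⟩
  have hsnd : |(l + 1) ^ 2 - M| ≤ (l + 2) ^ 2 := abs_le.mpr ⟨by nlinarith, by nlinarith⟩
  rw [couplingWeight, abs_div, abs_mul, abs_of_pos (by positivity :
    0 < 8 * ((2 * l + 1) * (2 * l + 3) ^ 2 * (2 * l + 5))), div_le_iff₀ (by positivity)]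
  calc
    |(l + 2) ^ 2 - M| * |(l + 1) ^ 2 - M| ≤ (l + 2) ^ 2 * (l + 2) ^ 2 := by gcongr
    _ ≤ (2 * l + 3) ^ 2 * ((2 * l + 1) * (2 * l + 5)) := by
      gcongr ?_ * ?_ <;> nlinarith
    _ = 1 / 8 * (8 * ((2 * l + 1) * (2 * l + 3) ^ 2 * (2 * l + 5))) := by ring

theorem abs_diagonalWeight_le (hl : 1 ≤ l) (hM₀ : 0 ≤ M) (hM : M ≤ l ^ 2) :
    |diagonalWeight l M| ≤ 1 / 8 := by
  have h₁ : 0 < 2 * l - 1 := by linarith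
  have habs : |3 * sphereEigenvalue l - 1 - 5 * M| ≤ 5 / 2 * ((2 * l - 1) * (2 * l + 3)) := by
    unfold sphereEigenvalue
    exact abs_le.mpr ⟨by nlinarith, by nlinarith⟩
  rw [diagonalWeight, abs_of_nonneg (by positivity), div_le_iff₀ (by positivity), ← sq_abs]
  calc
    |3 * sphereEigenvalue l - 1 - 5 * M| ^ 2 ≤ (5 / 2 * ((2 * l - 1) * (2 * l + 3))) ^ 2 := by
      gcongr
    _ = 1 / 8 * (50 * ((2 * l - 1) * (2 * l + 3)) ^ 2) := by ring

theorem abs_curvatureKernel_add_two_le (hl : 2 ≤ l) :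
    |curvatureKernel (sphereEigenvalue l) (sphereEigenvalue (l + 2))| ≤ 16 / l := by
  obtain ⟨t, ht, rfl⟩ := exists_nonneg_add_of_le hl
  rw [curvatureKernel_add_two (by linarith), abs_of_nonneg,
    div_le_div_iff₀ (by positivity) (by positivity)]
  · rw [← sub_nonneg]; ring_nf; positivity
  · refine div_nonneg ?_ (by positivity)
    ring_nf; positivity

theorem abs_curvatureKernel_sub_two_le (hl : 3 ≤ l) :
    |curvatureKernel (sphereEigenvalue l) (sphereEigenvalue (l - 2))| ≤ 16 / l := by
  have h₁ : 0 < l - 1 := by linarith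
  have h₂ : 0 < l - 2 := by linarith
  rw [curvatureKernel_sub_two (by linarith), neg_div, abs_neg, abs_of_nonneg,
    div_le_div_iff₀ (by positivity) (by positivity)]
  · obtain ⟨t, ht, rfl⟩ := exists_nonneg_add_of_le hl
    rw [← sub_nonneg]; ring_nf; positivity
  · refine div_nonneg ?_ (by positivity)
    obtain ⟨t, ht, rfl⟩ := exists_nonneg_add_of_le hl
    ring_nf; positivity

theorem abs_curvatureKernel_self_le (hl : 2 ≤ l) :
    |curvatureKernel (sphereEigenvalue l) (sphereEigenvalue l)| ≤ 8 / l := by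
  rw [curvatureKernel_self (sphereEigenvalue_pos (by linarith)).ne', neg_div, abs_neg,
    abs_of_nonneg (by positivity), sphereEigenvalue,
    div_le_div_iff₀ (by positivity) (by positivity)]
  obtain ⟨t, ht, rfl⟩ := exists_nonneg_add_of_le hl
  rw [← sub_nonneg]; ring_nf; positivity

theorem abs_curvatureBracket_le (hl : 3 ≤ l) (hM₀ : 0 ≤ M) (hM : M ≤ l ^ 2) :
    |curvatureBracket l M| ≤ 5 / l := by
  have hup : |couplingWeight l M| ≤ 1 / 8 :=
    abs_couplingWeight_le (by linarith) hM₀ (by nlinarith)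
  have hdown : |couplingWeight (l - 2) M| ≤ 1 / 8 :=
    abs_couplingWeight_le (by linarith) hM₀ (by simpa using hM)
  calc
    _ ≤ _ := abs_add_three _ _ _
    _ ≤ 1 / 8 * (16 / l) + 1 / 8 * (16 / l) + 1 / 8 * (8 / l) := by
      simp only [abs_mul]
      gcongr
      exacts [abs_curvatureKernel_add_two_le (by linarith), abs_curvatureKernel_sub_two_le hl,
        abs_diagonalWeight_le (by linarith) hM₀ hM, abs_curvatureKernel_self_le (by linarith)]
    _ = 5 / l := by ring

end Decay

theorem intCast_sq_le_natCast_sq {R : Type*} [Ring R] [LinearOrder R] [IsStrictOrderedRing R]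
    {l : ℕ} {m : ℤ} (hm : |m| ≤ l) : (m : R) ^ 2 ≤ (l : R) ^ 2 :=
  sq_le_sq.mpr (by rw [Nat.abs_cast]; exact_mod_cast hm)

theorem Qf_eq (l : ℕ) (m : ℤ) : Qf l m = diagonalWeight l ((m : ℝ) ^ 2) := by
  have h₁ : (l : ℝ) * 2 - 1 ≠ 0 := by
    have : l * 2 ≠ 1 := by lia
    exact sub_ne_zero.mpr (by exact_mod_cast this)
  unfold Qf diagonalWeight sphereEigenvalue
  field_simp
  ring

theorem rhf_eq (l : ℕ) (m : ℤ) : rhf l m =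
    couplingWeight l ((m : ℝ) ^ 2) + couplingWeight (l - 2) ((m : ℝ) ^ 2) +
      diagonalWeight l ((m : ℝ) ^ 2) := by
  rw [rhf, Qf_eq, couplingWeight_sub_two, couplingWeight]
  congr 2 <;> field_simp

section Cpe

variable {l : ℕ} (hl : 3 ≤ l) (m : ℤ)
include hl

theorem gaf_eq : gaf l m =
    couplingWeight l ((m : ℝ) ^ 2) * (sphereEigenvalue (l + 2) / sphereEigenvalue l) +
      couplingWeight (l - 2) ((m : ℝ) ^ 2) * (sphereEigenvalue (l - 2) / sphereEigenvalue l) +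
      diagonalWeight l ((m : ℝ) ^ 2) := by
  have hl' : (3 : ℝ) ≤ l := by exact_mod_cast hl
  obtain ⟨h₁, h₃, -⟩ := denominators_ne_zero (l := l) (by linarith)
  rw [gaf, Qf_eq, couplingWeight_sub_two, couplingWeight, sphereEigenvalue_add_two,
    sphereEigenvalue_sub_two, sphereEigenvalue]
  congr 2 <;> field_simp

theorem thf_eq : thf l m =
    couplingWeight l ((m : ℝ) ^ 2) * (sphereEigenvalue l / sphereEigenvalue (l + 2)) +
      couplingWeight (l - 2) ((m : ℝ) ^ 2) * (sphereEigenvalue l / sphereEigenvalue (l - 2)) +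
      diagonalWeight l ((m : ℝ) ^ 2) := by
  have hl' : (3 : ℝ) ≤ l := by exact_mod_cast hl
  obtain ⟨h₁, h₃, h₁', h₂'⟩ := denominators_ne_zero (l := l) (by linarith)
  rw [thf, Qf_eq, couplingWeight_sub_two, couplingWeight, sphereEigenvalue_add_two,
    sphereEigenvalue_sub_two, sphereEigenvalue]
  congr 2 <;> field_simp

theorem Cpe_eq_mul_curvatureBracket :
    Cpe l m = -(525 * (m : ℝ) ^ 2 / (32 * Real.pi)) * curvatureBracket l ((m : ℝ) ^ 2) := by
  have hl' : (0 : ℝ) < l := by exact_mod_cast Nat.zero_lt_of_lt hl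
  have hself : sphereEigenvalue l / sphereEigenvalue l = 1 :=
    div_self (sphereEigenvalue_pos hl').ne'
  have hbracket : 3 * gaf l m - 2 * (12 / ((l : ℝ) * (l + 1)) + 1) * rhf l m -
      (12 / ((l : ℝ) * (l + 1)) - 1) ^ 2 * thf l m = curvatureBracket l ((m : ℝ) ^ 2) := by
    rw [gaf_eq hl, rhf_eq, thf_eq hl, curvatureBracket, ← sphereEigenvalue]
    simp only [curvatureKernel, hself]
    ring
  rw [Cpe, hbracket]

theorem Cpe_nonpos (hm : |m| ≤ l) (hm₁ : |m| ≠ 1) : Cpe l m ≤ 0 := by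
  obtain rfl | hm₀ := eq_or_ne m 0
  · simp [Cpe]
  have hl' : (3 : ℝ) ≤ l := by exact_mod_cast hl
  have hm₂ : 2 ≤ |m| := by
    have := abs_pos.mpr hm₀
    lia
  have hfour : (4 : ℝ) ≤ (m : ℝ) ^ 2 := by
    have : 4 ≤ m ^ 2 := by nlinarith [sq_abs m]
    exact_mod_cast this
  rw [Cpe_eq_mul_curvatureBracket hl]
  exact mul_nonpos_of_nonpos_of_nonneg (neg_nonpos.mpr (by positivity))
    (curvatureBracket_nonneg hl' ⟨hfour, intCast_sq_le_natCast_sq hm⟩)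

theorem abs_Cpe_le (hm : |m| ≤ l) :
    |Cpe l m| ≤ 525 * (m : ℝ) ^ 2 / (32 * Real.pi) * (5 / l) := by
  have hl' : (3 : ℝ) ≤ l := by exact_mod_cast hl
  rw [Cpe_eq_mul_curvatureBracket hl, abs_mul, abs_neg, abs_of_nonneg (by positivity)]
  gcongr
  exact abs_curvatureBracket_le hl' (sq_nonneg _) (intCast_sq_le_natCast_sq hm)

end Cpe

theorem tendsto_Cpe_atTop (m : ℤ) :
    Filter.Tendsto (fun l : ℕ => Cpe l m) Filter.atTop (nhds 0) := by
  have hbound : Filter.Tendsto (fun l : ℕ => 525 * (m : ℝ) ^ 2 / (32 * Real.pi) * (5 / l))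
      Filter.atTop (nhds 0) := by
    simpa using (tendsto_const_div_atTop_nhds_zero_nat (5 : ℝ)).const_mul _
  refine squeeze_zero_norm' ?_ hbound
  filter_upwards [Filter.eventually_ge_atTop 3, Filter.eventually_ge_atTop m.natAbs] with l hl hml
  exact abs_Cpe_le hl m (by rw [Int.abs_eq_natAbs]; exact_mod_cast hml)

theorem positive_curvature_only_for_m_eq_one_general :
    (∀ l : ℕ, 3 ≤ l → ∀ m : ℤ, |m| ≤ (l : ℤ) → |m| ≠ 1 → Cpe l m ≤ 0) ∧
    ∀ m : ℤ, Filter.Tendsto (fun l : ℕ => Cpe l m) Filter.atTop (nhds 0) :=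
  ⟨fun _ hl m hm hm₁ => Cpe_nonpos hl m hm hm₁, tendsto_Cpe_atTop⟩

theorem positive_curvature_only_for_m_eq_one :
    (∀ l : ℕ, 3 ≤ l → ∀ m : ℤ, |m| ≤ (l : ℤ) → |m| ≠ 1 → Cpe l m ≤ 0) ∧
    Filter.Tendsto (fun l : ℕ => Cpe l 1) Filter.atTop (nhds 0) ∧
    Filter.Tendsto (fun l : ℕ => Cpe l (-1)) Filter.atTop (nhds 0) :=
  positive_curvature_only_for_m_eq_one_general.imp_right fun h => ⟨h 1, h (-1)⟩
end
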